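/- Descartes's rule of signs (positive part): for every nonzero real polynomial P, the number of positive real roots of P, counted with multiplicity, is at most the number of sign changes in the sequence of its nonzero coefficients, i.e. z⁺(P) ≤ v(P). -/

import Mathlib

open Polynomial

/-- Number of sign changes in a list of reals, after discarding zero entries:
the number of consecutive pairs with negative product. -/
noncomputable def signChanges (l : List ℝ) : ℕ :=
  let l' := l.filter (fun x => decide (x ≠ 0))
  (l'.zip l'.tail).countP (fun p => decide (p.1 * p.2 < 0))

/-- `v(P)`: number of sign changes in the sequence of nonzero coefficients of `P`,
listed in order of increasing degree. -/
noncomputable def v (P : Polynomial ℝ) : ℕ :=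
  signChanges (List.ofFn fun i : Fin (P.natDegree + 1) => P.coeff i)

/-- `c(P) := v(P(-X))`: the number of sign permanences of `P` (minimization convention). -/
noncomputable def c (P : Polynomial ℝ) : ℕ :=
  v (P.comp (-Polynomial.X))

/-- `z⁺(P)`: number of positive real roots of `P`, with multiplicity. -/
noncomputable def zpos (P : Polynomial ℝ) : ℕ :=
  (P.roots.filter (fun x => 0 < x)).card

/-- `z⁻(P)`: number of negative real roots of `P`, with multiplicity. -/
noncomputable def zneg (P : Polynomial ℝ) : ℕ :=
  (P.roots.filter (fun x => x < 0)).card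

lemma List.zip_tail_reverse {α : Type*} (l : List α) :
    l.reverse.zip l.reverse.tail = ((l.zip l.tail).map Prod.swap).reverse := by
  apply List.ext_getElem
  · simp
  · intro i h₁ h₂
    simp only [List.length_zip, List.length_reverse, List.length_tail] at h₁
    simp only [List.getElem_zip, List.getElem_reverse, List.getElem_tail, List.getElem_map,
      List.length_map, List.length_zip, List.length_tail, Prod.swap_prod_mk, Prod.mk.injEq]
    constructor <;> congr 1 <;> omega

lemma signChanges_reverse (l : List ℝ) : signChanges l.reverse = signChanges l := by
  simp only [signChanges, List.filter_reverse, List.zip_tail_reverse, List.countP_reverse,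
    List.countP_map]
  congr 1
  ext p
  simp [mul_comm]

lemma sign_ne_sign_iff_mul_neg {a b : ℝ} (ha : a ≠ 0) (hb : b ≠ 0) :
    SignType.sign a ≠ SignType.sign b ↔ a * b < 0 := by
  rcases ha.lt_or_gt with ha | ha <;> rcases hb.lt_or_gt with hb | hb <;>
    simp [sign_neg, sign_pos, ha, hb, mul_neg_iff, ha.not_gt, hb.not_gt]

lemma length_destutter'_map_sign (l : List ℝ) (a : ℝ) (ha : a ≠ 0) (hl : ∀ x ∈ l, x ≠ 0) :
    ((l.map SignType.sign).destutter' (· ≠ ·) (SignType.sign a)).length =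
      ((a :: l).zip l).countP (fun p => decide (p.1 * p.2 < 0)) + 1 := by
  induction l generalizing a with
  | nil => simp
  | cons b l ih =>
    have hb : b ≠ 0 := hl b (by simp)
    have ih := ih b hb fun x hx => hl x (by simp [hx])
    rw [List.map_cons, List.zip_cons_cons, List.countP_cons]
    by_cases h : SignType.sign a ≠ SignType.sign b
    · rw [List.destutter'_cons_pos _ h, List.length_cons, ih]
      simp [(sign_ne_sign_iff_mul_neg ha hb).1 h]
    · rw [List.destutter'_cons_neg _ h, not_not.1 h, ih]
      simp [mt (sign_ne_sign_iff_mul_neg ha hb).2 h]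

lemma length_destutter_sign_sub_one (l : List ℝ) :
    (((l.map SignType.sign).filter (· ≠ 0)).destutter (· ≠ ·)).length - 1 = signChanges l := by
  have hfilter : (l.map SignType.sign).filter (· ≠ 0) =
      (l.filter (fun x => decide (x ≠ 0))).map SignType.sign := by
    rw [List.filter_map]
    congr 2
    ext x
    simp
  have hne : ∀ x ∈ l.filter (fun x => decide (x ≠ 0)), x ≠ 0 := by simp
  rw [hfilter, signChanges]
  generalize l.filter (fun x => decide (x ≠ 0)) = m at hne
  cases m with
  | nil => simp
  | cons a m =>
    rw [List.map_cons, List.destutter_cons', length_destutter'_map_sign m a (hne a (by simp))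
      fun x hx => hne x (by simp [hx])]
    simp

lemma signVariations_eq_v {P : Polynomial ℝ} (hP : P ≠ 0) : P.signVariations = v P := by
  have hcoeff : P.coeffList =
      (List.ofFn fun i : Fin (P.natDegree + 1) => P.coeff i).reverse := by
    rw [coeffList, withBotSucc_degree_eq_natDegree_add_one hP, List.map_reverse,
      List.ofFn_eq_map, ← List.map_coe_finRange_eq_range, List.map_map]
    rfl
  rw [signVariations, length_destutter_sign_sub_one, hcoeff, signChanges_reverse, v]

/-- Descartes's rule of signs (positive part): `z⁺(P) ≤ v(P)`. -/
theorem descartes_rule_of_signs_pos (P : Polynomial ℝ) (hP : P ≠ 0) :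
    zpos P ≤ v P := by
  rw [zpos, ← Multiset.countP_eq_card_filter, ← signVariations_eq_v hP]
  exact roots_countP_pos_le_signVariations P
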